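/- Let G be a finite group and P a finite G-connected G-poset. Then the equivariant topological complexity of the geometric realization of the order complex of P is finite: TC_G(|K(P)|) < ∞. -/

import Mathlib

/-! ### Module A: equivariant TC / CC / LS for topological G-spaces -/

/-- The zigzag order `0 < 1 > 2 < 3 > ⋯` on natural numbers. -/
def zigzagLE (i j : ℕ) : Prop := i = j ∨ (i % 2 = 0 ∧ (j = i + 1 ∨ i = j + 1))

/-- The combinatorial interval `J m = {0, 1, …, m}`. -/
def J (m : ℕ) : Type := Fin (m + 1)

namespace J

/-- The underlying natural number of a point of `J m`. -/
def val {m : ℕ} (i : J m) : ℕ := Fin.val i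

/-- The initial point `0` of the combinatorial interval. -/
def zero (m : ℕ) : J m := (0 : Fin (m + 1))

/-- The final point `m` of the combinatorial interval. -/
def last (m : ℕ) : J m := Fin.last m

/-- The topology on `J m` whose open sets are the down-closed sets for the zigzag order. -/
instance (m : ℕ) : TopologicalSpace (J m) where
  IsOpen U := ∀ ⦃a⦄, a ∈ U → ∀ ⦃b⦄, zigzagLE (J.val b) (J.val a) → b ∈ U
  isOpen_univ := fun a _ b _ => Set.mem_univ b
  isOpen_inter := fun s t hs ht a ha b hba => ⟨hs ha.1 hba, ht ha.2 hba⟩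
  isOpen_sUnion := fun S hS a ha b hba => by
    obtain ⟨t, htS, hat⟩ := ha
    exact ⟨t, htS, hS t htS hat hba⟩

end J

section Equivariant

variable (G : Type*) [Group G]

/-- A set is `G`-invariant if it is stable under the action of every group element. -/
def GInvariant {α : Type*} [SMul G α] (U : Set α) : Prop :=
  ∀ g : G, ∀ x ∈ U, g • x ∈ U

variable (X : Type*) [TopologicalSpace X] [MulAction G X]

/-- `U ⊆ X × X` admits a continuous equivariant section of the free path fibration
`π : X^I → X × X`, `α ↦ (α 0, α 1)`. -/
def EqNavigable (U : Set (X × X)) : Prop :=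
  ∃ s : U → C(unitInterval, X), Continuous s ∧
    (∀ u : U, s u 0 = (u : X × X).1 ∧ s u 1 = (u : X × X).2) ∧
    (∀ (g : G) (u : U) (h : g • (u : X × X) ∈ U) (t : unitInterval),
      s ⟨g • (u : X × X), h⟩ t = g • s u t)

/-- The equivariant topological complexity: the least `k` such that `X × X` admits a cover by
`k` open invariant sets, each admitting a continuous equivariant section of the free path
fibration; `⊤` if there is no such cover. -/
noncomputable def eqTC : ℕ∞ :=
  sInf {k : ℕ∞ | ∃ n : ℕ, k = n ∧ ∃ U : Fin n → Set (X × X),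
    (∀ i, IsOpen (U i)) ∧ (∀ i, GInvariant G (U i)) ∧ (⋃ i, U i) = Set.univ ∧
    ∀ i, EqNavigable G X (U i)}

/-- `U ⊆ X × X` admits a continuous equivariant section of the combinatorial path fibration
`q_m : X^{J_m} → X × X`, `β ↦ (β 0, β m)`. -/
def EqNavigableJ (m : ℕ) (U : Set (X × X)) : Prop :=
  ∃ s : U → C(J m, X), Continuous s ∧
    (∀ u : U, s u (J.zero m) = (u : X × X).1 ∧ s u (J.last m) = (u : X × X).2) ∧
    (∀ (g : G) (u : U) (h : g • (u : X × X) ∈ U) (t : J m),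
      s ⟨g • (u : X × X), h⟩ t = g • s u t)

/-- The equivariant combinatorial complexity with paths of length `m`: the least `k` such that
`X × X` admits a cover by `k` open invariant sets, each admitting a continuous equivariant
section of the combinatorial path fibration `q_m`; `⊤` if there is no such cover. -/
noncomputable def eqCCm (m : ℕ) : ℕ∞ :=
  sInf {k : ℕ∞ | ∃ n : ℕ, k = n ∧ ∃ U : Fin n → Set (X × X),
    (∀ i, IsOpen (U i)) ∧ (∀ i, GInvariant G (U i)) ∧ (⋃ i, U i) = Set.univ ∧
    ∀ i, EqNavigableJ G X m (U i)}

/-- The equivariant combinatorial complexity: the minimum over all `m ≥ 1` of `eqCCm`. -/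
noncomputable def eqCC : ℕ∞ := ⨅ m : ℕ, eqCCm G X (m + 1)

/-- `U ⊆ X` is `G`-categorical for the orbit of `x₀`: the inclusion of `U` into `X` is
`G`-homotopic to a map taking values in the orbit of `x₀`. -/
def GCategoricalAt (U : Set X) (x₀ : X) : Prop :=
  ∃ F : U × unitInterval → X, Continuous F ∧
    (∀ u : U, F (u, 0) = (u : X)) ∧
    (∀ (g : G) (u : U) (h : g • (u : X) ∈ U) (t : unitInterval),
      F (⟨g • (u : X), h⟩, t) = g • F (u, t)) ∧
    (∀ u : U, F (u, 1) ∈ MulAction.orbit G x₀)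

/-- `U ⊆ X` is `G`-categorical: the inclusion of `U` into `X` is `G`-homotopic to a map taking
values in a single orbit. -/
def GCategorical (U : Set X) : Prop :=
  ∃ x₀ : X, GCategoricalAt G X U x₀

/-- The equivariant Lusternik–Schnirelmann category: the least `k` such that `X` is covered by
`k` open invariant `G`-categorical sets; `⊤` if there is no such cover. -/
noncomputable def eqLS : ℕ∞ :=
  sInf {k : ℕ∞ | ∃ n : ℕ, k = n ∧ ∃ U : Fin n → Set X,
    (∀ i, IsOpen (U i)) ∧ (∀ i, GInvariant G (U i)) ∧ (⋃ i, U i) = Set.univ ∧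
    ∀ i, GCategorical G X (U i)}

end Equivariant
/-! ### Module C: ordered G-simplicial complexes and their geometric realizations -/

/-- An ordered `G`-simplicial complex: a finite abstract simplicial complex whose vertex set
carries a partial order in which every simplex is totally ordered, together with an action of
`G` on the vertices by monotone simplicial maps. -/
structure GOSC (G : Type) [Group G] : Type 1 where
  /-- the vertex set -/
  V : Type
  [fin : Fintype V]
  [dec : DecidableEq V]
  [po : PartialOrder V]
  /-- the set of simplices -/
  faces : Set (Finset V)
  singleton_mem : ∀ v : V, {v} ∈ faces
  nonempty_of_mem : ∀ s ∈ faces, s.Nonempty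
  down_closed : ∀ s ∈ faces, ∀ t ⊆ s, t.Nonempty → t ∈ faces
  face_chain : ∀ s ∈ faces, ∀ x ∈ s, ∀ y ∈ s, x ≤ y ∨ y ≤ x
  /-- the action of `G` on vertices -/
  smul : G → V → V
  smul_one : ∀ v, smul 1 v = v
  smul_mul : ∀ g h v, smul (g * h) v = smul g (smul h v)
  smul_mono : ∀ g : G, ∀ x y : V, x ≤ y → smul g x ≤ smul g y
  smul_faces : ∀ g : G, ∀ s ∈ faces, s.image (smul g) ∈ faces

attribute [instance] GOSC.fin GOSC.dec GOSC.po

namespace GOSC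

variable {G : Type} [Group G]

/-- The underlying set of the geometric realization `|K|`: formal convex combinations of
vertices whose support is a simplex of `K`. -/
def realSet (K : GOSC G) : Set (K.V → ℝ) :=
  {f | (∀ v, 0 ≤ f v) ∧ (∑ v, f v) = 1 ∧ ∃ s ∈ K.faces, ∀ v, f v ≠ 0 → v ∈ s}

/-- The geometric realization `|K|` of an ordered `G`-simplicial complex, topologized as a
subspace of Euclidean space `K.V → ℝ`. -/
def Real (K : GOSC G) : Type := {f : K.V → ℝ // f ∈ K.realSet}

instance (K : GOSC G) : TopologicalSpace K.Real :=
  inferInstanceAs (TopologicalSpace {f : K.V → ℝ // f ∈ K.realSet})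

/-- Each `g : G` acts on `K.V` by an order isomorphism. -/
def permOf (K : GOSC G) (g : G) : Equiv K.V K.V where
  toFun := K.smul g
  invFun := K.smul g⁻¹
  left_inv := fun v => by
    rw [← K.smul_mul, inv_mul_cancel, K.smul_one]
  right_inv := fun v => by
    rw [← K.smul_mul, mul_inv_cancel, K.smul_one]

/-- The action of `G` on the geometric realization, by affine extension:
`(g • f) v = f (g⁻¹ • v)`. -/
instance (K : GOSC G) : SMul G K.Real where
  smul g f := ⟨fun v => f.val (K.smul g⁻¹ v), by
    obtain ⟨hnn, hsum, s, hs, hsupp⟩ := f.prop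
    refine ⟨fun v => hnn _, ?_, s.image (K.smul g), K.smul_faces g s hs, ?_⟩
    · rw [show (∑ v, f.val (K.smul g⁻¹ v)) = ∑ v, f.val (K.permOf g⁻¹ v) from rfl,
        Equiv.sum_comp (K.permOf g⁻¹) f.val]
      exact hsum
    · intro v hv
      have : K.smul g⁻¹ v ∈ s := hsupp _ hv
      refine Finset.mem_image.mpr ⟨K.smul g⁻¹ v, this, ?_⟩
      rw [← K.smul_mul, mul_inv_cancel, K.smul_one]⟩

lemma smul_apply (K : GOSC G) (g : G) (f : K.Real) (v : K.V) :
    (g • f).val v = f.val (K.smul g⁻¹ v) := rfl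

instance (K : GOSC G) : MulAction G K.Real where
  one_smul f := by
    apply Subtype.ext
    funext v
    rw [smul_apply, inv_one, K.smul_one]
  mul_smul g h f := by
    apply Subtype.ext
    funext v
    rw [smul_apply, smul_apply, smul_apply, mul_inv_rev, K.smul_mul]

end GOSC
/-! ### Order complexes of finite G-posets -/

/-- The order complex `K(P)` of a finite `G`-poset `P` (a finite poset with `G` acting by
order-preserving maps): the ordered `G`-simplicial complex whose vertices are the elements of
`P` and whose simplices are the nonempty totally ordered subsets (chains) of `P`. -/
noncomputable def orderComplexG (G : Type) [Group G] (P : Type) [Fintype P] [PartialOrder P]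
    [MulAction G P] (hmono : ∀ g : G, Monotone (fun p : P => g • p)) : GOSC G :=
  letI : DecidableEq P := Classical.decEq P
  { V := P
    faces := {s | s.Nonempty ∧ ∀ x ∈ s, ∀ y ∈ s, x ≤ y ∨ y ≤ x}
    singleton_mem := fun v => ⟨Finset.singleton_nonempty v, by
      intro x hx y hy
      rw [Finset.mem_singleton] at hx hy
      subst hx; subst hy; exact Or.inl le_rfl⟩
    nonempty_of_mem := fun s hs => hs.1
    down_closed := fun s hs t hts htne => ⟨htne, fun x hx y hy => hs.2 x (hts hx) y (hts hy)⟩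
    face_chain := fun s hs => hs.2
    smul := fun g p => g • p
    smul_one := fun p => one_smul G p
    smul_mul := fun g h p => mul_smul g h p
    smul_mono := fun g x y hxy => hmono g hxy
    smul_faces := fun g s hs => ⟨hs.1.image _, by
      intro x hx y hy
      rcases Finset.mem_image.mp hx with ⟨a, ha, rfl⟩
      rcases Finset.mem_image.mp hy with ⟨b, hb, rfl⟩
      rcases hs.2 a ha b hb with h | h
      · exact Or.inl (hmono g h)
      · exact Or.inr (hmono g h)⟩ }

namespace GOSC

variable {G : Type} [Group G]

/-- The vertex `x`, as a point of the geometric realization. -/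
noncomputable def vertexPoint (K : GOSC G) (x : K.V) : K.Real :=
  ⟨fun v => if v = x then 1 else 0, by
    refine ⟨fun v => by positivity, by simp, {x}, K.singleton_mem x, ?_⟩
    intro v hv
    rw [Finset.mem_singleton]
    by_contra h
    exact hv (if_neg h)⟩

/-- The open star of a vertex `x` in `|K|`: the union of the open simplices `σ°` over all
simplices `σ` containing `x`; equivalently, the set of points whose barycentric coordinate
at `x` is nonzero. -/
def star (K : GOSC G) (x : K.V) : Set K.Real :=
  {f | f.val x ≠ 0}

/-- The saturation `G · star(x)` of the open star of a vertex. -/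
def gStar (K : GOSC G) (x : K.V) : Set K.Real :=
  {h | ∃ g : G, ∃ f ∈ K.star x, h = g • f}

/-- The geometric realization `|K|` is `G`-connected: for every subgroup `H ≤ G`, the
fixed-point set `|K|^H` is path-connected. -/
def RealGConnected (K : GOSC G) : Prop :=
  ∀ H : Subgroup G, ∀ a ∈ {y : K.Real | ∀ h ∈ H, h • y = y},
    ∀ b ∈ {y : K.Real | ∀ h ∈ H, h • y = y},
      JoinedIn {y : K.Real | ∀ h ∈ H, h • y = y} a b

end GOSC

/-- A zigzag of order relations between `x` and `y` staying inside the set `S`. -/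
def ZigzagIn {P : Type*} [PartialOrder P] (S : Set P) (x y : P) : Prop :=
  Relation.ReflTransGen (fun a b => a ∈ S ∧ b ∈ S ∧ (a ≤ b ∨ b ≤ a)) x y

/-- A finite `G`-poset `P` is `G`-connected: for every subgroup `H ≤ G`, the fixed-point set
`P^H` is order-connected (any two of its points are joined by a zigzag of order relations in
`P^H`; equivalently, `P^H` with its down-set topology is path-connected). -/
def PosetGConnected (G P : Type*) [Group G] [PartialOrder P] [MulAction G P] : Prop :=
  ∀ H : Subgroup G, ∀ x ∈ {p : P | ∀ h ∈ H, h • p = p}, ∀ y ∈ {p : P | ∀ h ∈ H, h • p = p},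
    ZigzagIn {p : P | ∀ h ∈ H, h • p = p} x y

namespace GOSC

variable {G : Type} [Group G]

theorem real_ext {K : GOSC G} {a b : K.Real} (h : ∀ v, a.val v = b.val v) : a = b :=
  Subtype.ext (funext h)

theorem continuous_real_mk {K : GOSC G} {Y : Type*} [TopologicalSpace Y] {f : Y → K.Real}
    (h : ∀ v, Continuous fun y => (f y).val v) : Continuous f :=
  Continuous.subtype_mk (continuous_pi h) _

theorem continuous_coord (K : GOSC G) (v : K.V) : Continuous fun f : K.Real => f.val v :=
  (continuous_apply v).comp continuous_subtype_val

instance (K : GOSC G) : ContinuousConstSMul G K.Real where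
  continuous_const_smul g := continuous_real_mk fun v => K.continuous_coord (K.smul g⁻¹ v)

/-- two points lie in a common simplex -/
def Common (K : GOSC G) (a b : K.Real) : Prop :=
  ∃ s ∈ K.faces, (∀ v, a.val v ≠ 0 → v ∈ s) ∧ (∀ v, b.val v ≠ 0 → v ∈ s)

/-- the segment between two points of a common simplex -/
def seg (K : GOSC G) {a b : K.Real} (h : K.Common a b) (t : unitInterval) : K.Real :=
  ⟨fun v => (1 - (t : ℝ)) * a.val v + t * b.val v, by
    obtain ⟨s, hs, ha, hb⟩ := h
    refine ⟨fun v => ?_, ?_, s, hs, fun v hv => ?_⟩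
    · have h1 := a.prop.1 v
      have h2 := b.prop.1 v
      have h3 := t.2.1
      have h4 : 0 ≤ 1 - (t : ℝ) := sub_nonneg.2 t.2.2
      positivity
    · rw [Finset.sum_add_distrib, ← Finset.mul_sum, ← Finset.mul_sum, a.prop.2.1, b.prop.2.1]
      ring
    · by_contra hc
      have h1 : a.val v = 0 := by
        by_contra h
        exact hc (ha v h)
      have h2 : b.val v = 0 := by
        by_contra h
        exact hc (hb v h)
      refine hv ?_
      change (1 - (t : ℝ)) * a.val v + t * b.val v = 0
      rw [h1, h2]
      ring⟩

theorem seg_val (K : GOSC G) {a b : K.Real} (h : K.Common a b) (t : unitInterval) (v : K.V) :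
    (K.seg h t).val v = (1 - (t : ℝ)) * a.val v + t * b.val v := rfl

/-- the segment as a path -/
def segPath (K : GOSC G) {a b : K.Real} (h : K.Common a b) : Path a b where
  toFun := K.seg h
  continuous_toFun := continuous_real_mk fun v => by
    simp only [seg_val]
    fun_prop
  source' := real_ext fun v => by simp [seg_val]
  target' := real_ext fun v => by simp [seg_val]

theorem segPath_val (K : GOSC G) {a b : K.Real} (h : K.Common a b) (t : unitInterval) (v : K.V) :
    (K.segPath h t).val v = (1 - (t : ℝ)) * a.val v + t * b.val v := rfl

theorem segPath_smul (K : GOSC G) {a b a' b' : K.Real} (h : K.Common a b) (h' : K.Common a' b')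
    (g : G) (ha : a' = g • a) (hb : b' = g • b) (t : unitInterval) :
    K.segPath h' t = g • K.segPath h t := by
  subst ha hb
  exact real_ext fun v => rfl

theorem vertexPoint_val (K : GOSC G) (x v : K.V) :
    (K.vertexPoint x).val v = if v = x then 1 else 0 := rfl

theorem smul_vertexPoint (K : GOSC G) (g : G) (x : K.V) :
    g • K.vertexPoint x = K.vertexPoint (K.smul g x) := by
  refine real_ext fun v => ?_
  rw [smul_apply, vertexPoint_val, vertexPoint_val]
  have : K.smul g⁻¹ v = x ↔ v = K.smul g x := (K.permOf g).symm_apply_eq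
  simp only [this]

theorem common_star (K : GOSC G) {a : K.Real} {x : K.V} (h : a ∈ K.star x) :
    K.Common a (K.vertexPoint x) := by
  obtain ⟨s, hs, ha⟩ := a.prop.2.2
  refine ⟨s, hs, ha, fun v hv => ?_⟩
  rw [vertexPoint_val] at hv
  have : v = x := by
    by_contra hc
    exact hv (if_neg hc)
  rw [this]
  exact ha x h

theorem common_vertex (K : GOSC G) {x y : K.V} (h : ({x, y} : Finset K.V) ∈ K.faces) :
    K.Common (K.vertexPoint x) (K.vertexPoint y) := by
  refine ⟨_, h, fun v hv => ?_, fun v hv => ?_⟩ <;>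
  · rw [vertexPoint_val] at hv
    have := (ite_ne_right_iff.1 hv).1
    simp [this]

theorem isOpen_star (K : GOSC G) (x : K.V) : IsOpen (K.star x) :=
  isOpen_ne_fun (K.continuous_coord x) continuous_const

theorem le_smul_eq [Finite G] (K : GOSC G) (g : G) (x : K.V) (h : x ≤ K.smul g x) :
    K.smul g x = x := by
  have key : ∀ n : ℕ, K.smul g x ≤ K.smul (g ^ (n + 1)) x := by
    intro n
    induction n with
    | zero => simp
    | succ n ih =>
      refine ih.trans ?_
      rw [pow_succ g (n + 1), K.smul_mul _ g]
      exact K.smul_mono _ _ _ h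
  have h1 := key (orderOf g - 1)
  rw [Nat.sub_add_cancel (orderOf_pos g), pow_orderOf_eq_one, K.smul_one] at h1
  exact le_antisymm h1 h

theorem smul_eq_of_star [Finite G] (K : GOSC G) (g : G) (x : K.V) (a : K.Real)
    (h1 : a ∈ K.star x) (h2 : g • a ∈ K.star x) : K.smul g x = x := by
  obtain ⟨s, hs, ha⟩ := a.prop.2.2
  have hx := ha x h1
  have hgx := ha (K.smul g⁻¹ x) h2
  have key : K.smul g⁻¹ x = x := by
    rcases K.face_chain s hs _ hx _ hgx with h | h
    · exact K.le_smul_eq _ _ h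
    · have h3 := K.smul_mono g _ _ h
      rw [← K.smul_mul, mul_inv_cancel, K.smul_one] at h3
      have h4 := K.le_smul_eq _ _ h3
      conv_lhs => rw [← h4]
      rw [← K.smul_mul, inv_mul_cancel, K.smul_one]
  conv_lhs => rw [← key]
  rw [← K.smul_mul, mul_inv_cancel, K.smul_one]

theorem exists_star (K : GOSC G) (a : K.Real) : ∃ x, a ∈ K.star x := by
  by_contra! h
  have h0 : ∀ x, a.val x = 0 := fun x => not_not.1 (h x)
  have := a.prop.2.1
  simp [h0] at this

theorem navigable_star [Finite G] (K : GOSC G) (x y : K.V)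
    (γ : Path (K.vertexPoint x) (K.vertexPoint y))
    (hγ : ∀ g : G, K.smul g x = x → K.smul g y = y → ∀ t, g • γ t = γ t) :
    EqNavigable G K.Real (K.star x ×ˢ K.star y) := by
  let W : Set (K.Real × K.Real) := K.star x ×ˢ K.star y
  let p1 : ∀ u : W, Path u.1.1 (K.vertexPoint x) := fun u => K.segPath (K.common_star u.2.1)
  let p2 : ∀ u : W, Path u.1.2 (K.vertexPoint y) := fun u => K.segPath (K.common_star u.2.2)
  have c1 : Continuous ↿p1 := continuous_real_mk fun v => by
    have := K.continuous_coord v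
    change Continuous fun z : W × unitInterval =>
      (1 - (z.2 : ℝ)) * z.1.1.1.val v + z.2 * (K.vertexPoint x).val v
    have h : Continuous fun z : W × unitInterval => z.1.1.1.val v := this.comp (by fun_prop)
    fun_prop
  have c2 : Continuous ↿p2 := continuous_real_mk fun v => by
    have := K.continuous_coord v
    change Continuous fun z : W × unitInterval =>
      (1 - (z.2 : ℝ)) * z.1.1.2.val v + z.2 * (K.vertexPoint y).val v
    have h : Continuous fun z : W × unitInterval => z.1.1.2.val v := this.comp (by fun_prop)
    fun_prop
  have c3 : Continuous ↿(fun u : W => γ) := by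
    change Continuous fun z : W × unitInterval => γ z.2
    fun_prop
  have c2' := Path.symm_continuous_family p2 c2
  have c4 := Path.trans_continuous_family _ (Path.trans_continuous_family _ c1 _ c3) _ c2'
  refine ⟨fun u => (((p1 u).trans γ).trans (p2 u).symm).toContinuousMap, ?_, ?_, ?_⟩
  · exact ContinuousMap.continuous_of_continuous_uncurry _ c4
  · intro u
    exact ⟨Path.source _, Path.target _⟩
  · intro g u h t
    have hx := K.smul_eq_of_star g x _ u.2.1 h.1
    have hy := K.smul_eq_of_star g y _ u.2.2 h.2
    have e1 : ∀ t, p1 ⟨g • u.1, h⟩ t = g • p1 u t := fun t =>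
      K.segPath_smul _ _ g rfl (by rw [smul_vertexPoint, hx]) t
    have e2 : ∀ t, p2 ⟨g • u.1, h⟩ t = g • p2 u t := fun t =>
      K.segPath_smul _ _ g rfl (by rw [smul_vertexPoint, hy]) t
    have e3 := hγ g hx hy
    change (((p1 ⟨g • u.1, h⟩).trans γ).trans (p2 ⟨g • u.1, h⟩).symm) t
      = g • (((p1 u).trans γ).trans (p2 u).symm) t
    simp only [Path.trans_apply, Path.symm_apply]
    split_ifs
    · exact e1 _
    · exact (e3 _).symm
    · exact e2 _

end GOSC

theorem EqNavigable.saturate {G X : Type*} [Group G] [TopologicalSpace X] [MulAction G X]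
    [ContinuousConstSMul G X] {W : Set (X × X)} (hW : IsOpen W) (h : EqNavigable G X W) :
    EqNavigable G X {u | ∃ g : G, g • u ∈ W} := by
  obtain ⟨s, hs, hend, heq⟩ := h
  let U : Set (X × X) := {u | ∃ g : G, g • u ∈ W}
  choose c hc using fun u : U => u.2
  let act : G → C(X, X) := fun g => ⟨fun x => g • x, continuous_const_smul g⟩
  let S : U → C(unitInterval, X) := fun u => (act (c u)⁻¹).comp (s ⟨c u • u.1, hc u⟩)
  have key : ∀ (u : U) (g : G) (hg : g • u.1 ∈ W) t, S u t = g⁻¹ • s ⟨g • u.1, hg⟩ t := by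
    intro u g hg t
    have h1 : (g * (c u)⁻¹) • (c u • u.1) = g • u.1 := by rw [smul_smul]; simp
    have h2 := heq (g * (c u)⁻¹) ⟨c u • u.1, hc u⟩ (by rw [h1]; exact hg) t
    have h3 : s ⟨(g * (c u)⁻¹) • (c u • u.1), by rw [h1]; exact hg⟩ = s ⟨g • u.1, hg⟩ := by
      congr 2
    change s ⟨(g * (c u)⁻¹) • (c u • u.1), _⟩ t = _ at h2
    rw [← h3, h2, smul_smul]
    simp [S, act]
  refine ⟨S, ?_, ?_, ?_⟩
  · rw [continuous_iff_continuousAt]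
    intro u
    have hsm : Continuous fun v : U => c u • v.1 :=
      (continuous_const_smul (c u)).comp continuous_subtype_val
    have hopen : IsOpen {v : U | c u • v.1 ∈ W} := hW.preimage hsm
    refine ContinuousOn.continuousAt (s := {v : U | c u • v.1 ∈ W}) ?_ (hopen.mem_nhds (hc u))
    rw [continuousOn_iff_continuous_domRestrict]
    have : Set.domRestrict {v : U | c u • v.1 ∈ W} S =
        fun v => (act (c u)⁻¹).comp (s ⟨c u • v.1.1, v.2⟩) := by
      funext v
      ext t
      exact key v.1 (c u) v.2 t
    rw [this]
    refine (ContinuousMap.continuous_postcomp _).comp (hs.comp ?_)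
    exact Continuous.subtype_mk (hsm.comp continuous_subtype_val) _
  · intro u
    have := hend ⟨c u • u.1, hc u⟩
    constructor
    · change (c u)⁻¹ • s _ 0 = _
      rw [this.1]; simp
    · change (c u)⁻¹ • s _ 1 = _
      rw [this.2]; simp
  · intro g u hgu t
    have h1 : (c u * g⁻¹) • (g • u.1) = c u • u.1 := by rw [smul_smul]; simp
    rw [key ⟨g • u.1, hgu⟩ (c u * g⁻¹) (by rw [h1]; exact hc u) t, key u (c u) (hc u) t]
    have h3 : s ⟨(c u * g⁻¹) • (g • u.1), by rw [h1]; exact hc u⟩ = s ⟨c u • u.1, hc u⟩ := by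
      congr 2
    rw [h3, smul_smul]
    simp

theorem eqTC_lt_top_of_cover {G X : Type*} [Group G] [TopologicalSpace X] [MulAction G X]
    [ContinuousConstSMul G X] {ι : Type*} [Finite ι] (W : ι → Set (X × X))
    (hW : ∀ i, IsOpen (W i)) (hcov : ∀ u, ∃ i, u ∈ W i) (hn : ∀ i, EqNavigable G X (W i)) :
    eqTC G X < ⊤ := by
  obtain ⟨n, ⟨e⟩⟩ := Finite.exists_equiv_fin ι
  refine lt_of_le_of_lt (sInf_le ⟨n, rfl, fun i => {u | ∃ g : G, g • u ∈ W (e.symm i)},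
    ?_, ?_, ?_, ?_⟩) (WithTop.coe_lt_top n)
  · intro i
    have : {u | ∃ g : G, g • u ∈ W (e.symm i)} =
        ⋃ g : G, (fun u : X × X => g • u) ⁻¹' W (e.symm i) := by
      ext u
      simp
    change IsOpen {u | ∃ g : G, g • u ∈ W (e.symm i)}
    rw [this]
    exact isOpen_iUnion fun g => (hW _).preimage (continuous_const_smul g)
  · rintro i g x ⟨k, hk⟩
    refine ⟨k * g⁻¹, ?_⟩
    rw [smul_smul]
    simpa using hk
  · refine Set.eq_univ_of_forall fun u => ?_
    obtain ⟨i, hi⟩ := hcov u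
    exact Set.mem_iUnion.2 ⟨e i, 1, by simpa using hi⟩
  · intro i
    exact (hn _).saturate (hW _)

theorem TC_real_orderComplex_lt_top (G P : Type) [Group G] [Finite G]
    [Fintype P] [PartialOrder P] [MulAction G P]
    (hmono : ∀ g : G, Monotone (fun p : P => g • p))
    (hconn : PosetGConnected G P) :
    eqTC G (orderComplexG G P hmono).Real < ⊤ := by
  let K := orderComplexG G P hmono
  have hface : ∀ p q : K.V, p ≤ q ∨ q ≤ p → ({p, q} : Finset K.V) ∈ K.faces := by
    intro p q h
    have hmem : ∀ a ∈ ({p, q} : Finset K.V), a = p ∨ a = q := by simp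
    have hne : ({p, q} : Finset K.V).Nonempty := Finset.insert_nonempty _ _
    have hch : ∀ a ∈ ({p, q} : Finset K.V), ∀ b ∈ ({p, q} : Finset K.V), a ≤ b ∨ b ≤ a := by
      intro a ha b hb
      rcases hmem a ha with rfl | rfl <;> rcases hmem b hb with rfl | rfl
      · exact Or.inl le_rfl
      · exact h
      · exact h.symm
      · exact Or.inl le_rfl
    exact ⟨hne, hch⟩
  have hpath : ∀ (H : Subgroup G) (x y : P), ZigzagIn {p : P | ∀ h ∈ H, h • p = p} x y →
      (∀ h ∈ H, h • x = x) →
      ∃ γ : Path (K.vertexPoint x) (K.vertexPoint y), ∀ g ∈ H, ∀ t, g • γ t = γ t := by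
    intro H x y hz hx
    induction hz with
    | refl =>
      refine ⟨Path.refl _, fun g hg t => ?_⟩
      exact (K.smul_vertexPoint g x).trans (congrArg K.vertexPoint (hx g hg))
    | @tail b c _ hbc ih =>
      obtain ⟨γ, hγ⟩ := ih
      have hcom := K.common_vertex (hface b c hbc.2.2)
      refine ⟨γ.trans (K.segPath hcom), fun g hg t => ?_⟩
      simp only [Path.trans_apply]
      split_ifs
      · exact hγ g hg _
      · refine (K.segPath_smul hcom hcom g ?_ ?_ _).symm
        · exact ((K.smul_vertexPoint g b).trans (congrArg K.vertexPoint (hbc.1 g hg))).symm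
        · exact ((K.smul_vertexPoint g c).trans (congrArg K.vertexPoint (hbc.2.1 g hg))).symm
  refine eqTC_lt_top_of_cover (X := K.Real) (ι := K.V × K.V)
    (fun i => K.star i.1 ×ˢ K.star i.2) ?_ ?_ ?_
  · exact fun i => (K.isOpen_star _).prod (K.isOpen_star _)
  · intro u
    obtain ⟨x, hx⟩ := K.exists_star u.1
    obtain ⟨y, hy⟩ := K.exists_star u.2
    exact ⟨(x, y), hx, hy⟩
  · rintro ⟨x, y⟩
    let x' : P := x
    let y' : P := y
    let H : Subgroup G := MulAction.stabilizer G x' ⊓ MulAction.stabilizer G y'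
    have hx : ∀ h ∈ H, h • x' = x' := fun h hh => hh.1
    have hy : ∀ h ∈ H, h • y' = y' := fun h hh => hh.2
    obtain ⟨γ, hγ⟩ := hpath H x' y' (hconn H x' hx y' hy) hx
    exact K.navigable_star x y γ fun g h1 h2 t => hγ g ⟨h1, h2⟩ t
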